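/- Let R, S, T be β(0,1)-trees with open(R) = 1, root(S) = 1 and T nontrivial, and let i, j be integers with 1 ≤ i ≤ root(T) and 1 ≤ j ≤ open(T). Then ν_{i+1}(R, μ_j(S,T)) = μ_{j+1}(S, ν_i(R,T)). -/

import Mathlib

/-!
Both operations walk down rightmost paths, so the identity is checked node by node on the
rightmost path of `R`, with `k = i - 1`.

Since `open(R) = 1`, the only open node on the rightmost path of `R` is its rightmost leaf `x`;
that is, every non-leaf, non-root node of this path is excessive.  Attaching `T` at `x` and adding
`k` along the path adds `k` both to such a node and to the sum of its children's labels, so it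
stays excessive and its parent stays non-open.  The leaf `x`, however, becomes a non-leaf node
labeled `k` with the children of `T`, whose labels sum to `root(T) - 1 ≥ k`; it is moderate, and
so its parent is open.  Hence the rightmost path of `ν_i(R,T)` has exactly one open node above
`x`, and the `(j+1)`-st open node of `ν_i(R,T)` is the `j`-th open node of `T`
(`muT_nuT`).  Below `x` nothing depends on the label of `x`, as `T` is nontrivial
(`muT_node_eq`), and the label increments on the two sides agree: `k + 1` above and at `x`, and
those of `μ_j(S,T)` below.
-/

/-- Labeled rooted plane trees: each node carries a natural-number label and an
ordered list of subtrees. -/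
inductive BTree : Type
  | node : ℕ → List BTree → BTree
deriving Repr

namespace BTree

/-- The trivial β(0,1)-tree ε: a single node labeled 0. -/
def eps : BTree := node 0 []

/-- The label of the root of a tree. -/
def label : BTree → ℕ
  | node n _ => n

/-- The list of subtrees of the root. -/
def children : BTree → List BTree
  | node _ ts => ts

/-- The sum of the labels of the children of the root. -/
def childSum (t : BTree) : ℕ := (t.children.map label).sum

/-- Validity condition for non-root nodes of a β(0,1)-tree: leaves have label 0,
and the label of every node exceeds the sum of its children's labels by at most one. -/
inductive ValidSub : BTree → Prop
  | mk (n : ℕ) (ts : List BTree) :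
      (ts = [] → n = 0) →
      n ≤ (ts.map label).sum + 1 →
      (∀ t ∈ ts, ValidSub t) →
      ValidSub (node n ts)

/-- `t` is a β(0,1)-tree: the trivial tree is the single node labeled 0; otherwise the
root label is one more than the sum of its children's labels, and every non-root node
has label at most one more than the sum of its children's labels, leaves having label 0. -/
def IsBeta (t : BTree) : Prop :=
  (t.children = [] → t.label = 0) ∧
  (t.children ≠ [] → t.label = childSum t + 1) ∧
  ∀ c ∈ t.children, ValidSub c

mutual
/-- The rightmost path of a tree, from the root to the rightmost leaf; each node on
the path is recorded together with its full subtree. -/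
def rpath : BTree → List BTree
  | node n ts => node n ts :: rpathL ts
def rpathL : List BTree → List BTree
  | [] => []
  | [t] => rpath t
  | _ :: t :: ts => rpathL (t :: ts)
end

/-- A node is moderate if its label does not exceed the sum of its children's labels. -/
def moderate (t : BTree) : Bool := decide (t.label ≤ childSum t)

/-- A node (on the rightmost path) is open iff it is a leaf (i.e. it is the rightmost
leaf), or its rightmost child is a non-leaf moderate node. -/
def isOpenNode (t : BTree) : Bool :=
  match t.children.getLast? with
  | none => true
  | some c => !c.children.isEmpty && moderate c

/-- The statistic `root`: the label of the root. -/
def rootStat (t : BTree) : ℕ := t.label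

/-- The statistic `open`: the number of open nodes (all of which lie on the
rightmost path), with open(ε) = 0. -/
def openStat : BTree → ℕ
  | node 0 [] => 0
  | t => (rpath t).countP isOpenNode

/-- The statistic `rmod`: the number of moderate nodes on the rightmost path,
with rmod(ε) = 0. -/
def rmodStat : BTree → ℕ
  | node 0 [] => 0
  | t => (rpath t).countP moderate

mutual
/-- The number of nodes of a tree. -/
def size : BTree → ℕ
  | node _ ts => 1 + sizeL ts
def sizeL : List BTree → ℕ
  | [] => 0
  | t :: ts => size t + sizeL ts
end

mutual
/-- The number of excessive nodes of a tree (nodes whose label exceeds the sum of the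
labels of their children). -/
def excT : BTree → ℕ
  | node n ts => (if (ts.map label).sum < n then 1 else 0) + excL ts
def excL : List BTree → ℕ
  | [] => 0
  | t :: ts => excT t + excL ts
end

/-- The sum U ⊕ V of two trees: identify the two roots into a new root labeled
root(U) + root(V) − 1, its children being those of U followed by those of V. -/
def oplus (u v : BTree) : BTree := node (u.label + v.label - 1) (u.children ++ v.children)

/-- Relabel the root. -/
def setLabel (i : ℕ) (t : BTree) : BTree := node i t.children

/-- λ_i(T): join a new root, labeled i+1, by an edge to the old root, which is relabeled i. -/
def lam (i : ℕ) (t : BTree) : BTree := node (i + 1) [setLabel i t]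

/-- Iterated ⊕ of a list of trees (ε for the empty list). -/
def oplusList : List BTree → BTree
  | [] => eps
  | [t] => t
  | t :: ts => oplus t (oplusList ts)

/-- ρ(T₁,…,T_k) = λ₀(T₁) ⊕ ⋯ ⊕ λ₀(T_k). -/
def rho (Ts : List BTree) : BTree := oplusList (Ts.map (lam 0))

/-- Add one to the label of the root. -/
def incRoot (t : BTree) : BTree := node (t.label + 1) t.children

mutual
/-- Walk down the rightmost path of a tree looking for the i-th open node x, adding one
to each label on the way (through x, and through the rightmost child y of x if x is not
a leaf); at x, append the children of S. -/
def muT (S : BTree) : ℕ → BTree → BTree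
  | i, node n ts =>
    if isOpenNode (node n ts) && decide (i ≤ 1) then
      if ts.isEmpty then node (n + 1) S.children
      else node (n + 1) (ts.dropLast ++ [incRoot (ts.getLastD eps)] ++ S.children)
    else
      node (n + 1) (muL S (if isOpenNode (node n ts) then i - 1 else i) ts)
def muL (S : BTree) (i : ℕ) : List BTree → List BTree
  | [] => []
  | [t] => [muT S i t]
  | t :: ts => t :: muL S i ts
end

/-- μ_i(S,T): identify the i-th open node x on the rightmost path of T with the root of
S, keeping the label of x, and add one to each node on the rightmost path of T between
the root and y (inclusive), where y = x if x is a leaf and otherwise y is the rightmost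
child of x.  (In particular μ₁(S,ε) = S when root(S) = 1.) -/
def mu (i : ℕ) (S T : BTree) : BTree := muT S i T

mutual
/-- Walk down the rightmost path of a tree adding j to every label; at the rightmost
leaf, attach the children of T. -/
def nuT (T : BTree) (j : ℕ) : BTree → BTree
  | node n [] => node (n + j) T.children
  | node n ts => node (n + j) (nuL T j ts)
def nuL (T : BTree) (j : ℕ) : List BTree → List BTree
  | [] => []
  | [t] => [nuT T j t]
  | t :: ts => t :: nuL T j ts
end

/-- ν_i(S,T): identify the rightmost leaf x of S with the root of T, keeping the zero
label of x, and add i − 1 to each node on the rightmost path of S between the root and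
x (inclusive).  (In particular ν₁(S,ε) = S.) -/
def nu (i : ℕ) (S T : BTree) : BTree := nuT T (i - 1) S

/-- σ(T₁,…,T_k) = μ₁(ρ(T_{k−1},…,T₁,ε), T_k). -/
def sigma (Ts : List BTree) : BTree :=
  mu 1 (rho (Ts.dropLast.reverse ++ [eps])) (Ts.getLastD eps)

/-- The maximal suffix of a list of trees all of whose root labels are 0. -/
def zeroSuffix : List BTree → List BTree
  | [] => []
  | t :: ts =>
    let z := zeroSuffix ts
    if z.length = ts.length ∧ t.label = 0 then t :: z else z

/-- Subtract one from the label of the root. -/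
def decRoot (t : BTree) : BTree := node (t.label - 1) t.children

mutual
/-- Inverse of μ on β(0,1)-trees with root label > 1: walk down the rightmost path to
the parent x of the first node labeled 0 on the path (subtracting one from the labels
on the way); the maximal zero-labeled suffix of the children of x is the list of
children of S, the rest (with the label of its last element decremented) are the
children of x in T.  Returns the pair (T, S) such that the input is μ_i(S,T). -/
def decT : BTree → BTree × BTree
  | node n ts =>
    if (ts.getLastD eps).label = 0 then
      let zs := zeroSuffix ts
      let ps := ts.take (ts.length - zs.length)
      (node (n - 1) (if ps.isEmpty then [] else ps.dropLast ++ [decRoot (ps.getLastD eps)]),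
       node 1 zs)
    else
      (node (n - 1) (decL ts).1, (decL ts).2)
def decL : List BTree → List BTree × BTree
  | [] => ([], eps)
  | [t] => ([(decT t).1], (decT t).2)
  | t :: ts => (t :: (decL ts).1, (decL ts).2)
end

/-- Restore the root label of a β(0,1)-tree whose root label was forgotten:
ε for a single node, and otherwise one plus the sum of the children's labels. -/
def makeRoot : BTree → BTree
  | node _ [] => eps
  | node _ ts => node ((ts.map label).sum + 1) ts

/-- Fueled version of the map g.  A β(0,1)-tree with root label 1 is ρ(T₁,…,T_k) where
the Tⱼ are recovered from the children via `makeRoot`, and g maps it to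
σ(g(T₁),…,g(T_k)); a β(0,1)-tree U with root label > 1 is μ_i(S,T) where (T,S) = decT U
and i = open(U) + 1 − open(S) (since open(μ_i(S,T)) = i − 1 + open(S)), and g maps it
to ν_i(g(S),g(T)); finally g(ε) = ε. -/
def gF : ℕ → BTree → BTree
  | 0, t => t
  | fuel + 1, t =>
    match t with
    | node 0 _ => t
    | node 1 cs => sigma (cs.map fun c => gF fuel (makeRoot c))
    | node _ _ =>
      nu (openStat t + 1 - openStat (decT t).2) (gF fuel (decT t).2) (gF fuel (decT t).1)

/-- The map g on β(0,1)-trees: g(ε) = ε, g(ρ(T₁,…,T_k)) = σ(g(T₁),…,g(T_k)), and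
g(μ_i(S,T)) = ν_i(g(S), g(T)).  (The number of nodes suffices as fuel since all
recursive calls are on trees with strictly fewer nodes.) -/
def g (t : BTree) : BTree := gF (size t) t


/-! ### Rightmost paths in terms of the last child -/

@[simp] lemma children_node (n : ℕ) (ts : List BTree) : (node n ts).children = ts := rfl

@[simp] lemma label_node (n : ℕ) (ts : List BTree) : (node n ts).label = n := rfl

@[simp] lemma rpathL_append (l : List BTree) (c : BTree) : rpathL (l ++ [c]) = rpath c := by
  induction l with
  | nil => simp [rpathL]
  | cons a l ih => cases l <;> simp_all [rpathL]

@[simp] lemma nuL_append (T : BTree) (k : ℕ) (l : List BTree) (c : BTree) :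
    nuL T k (l ++ [c]) = l ++ [nuT T k c] := by
  induction l with
  | nil => simp [nuL]
  | cons a l ih => cases l <;> simp_all [nuL]

@[simp] lemma muL_append (S : BTree) (j : ℕ) (l : List BTree) (c : BTree) :
    muL S j (l ++ [c]) = l ++ [muT S j c] := by
  induction l with
  | nil => simp [muL]
  | cons a l ih => cases l <;> simp_all [muL]

@[simp] lemma nuT_append (T : BTree) (k n : ℕ) (l : List BTree) (c : BTree) :
    nuT T k (node n (l ++ [c])) = node (n + k) (l ++ [nuT T k c]) := by
  rw [← nuL_append]
  cases l <;> simp [nuT]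

lemma moderate_iff (t : BTree) : moderate t = true ↔ t.label ≤ childSum t :=
  decide_eq_true_iff

lemma isOpenNode_append (n : ℕ) (l : List BTree) (c : BTree) :
    isOpenNode (node n (l ++ [c])) = (!c.children.isEmpty && moderate c) := by
  simp [isOpenNode, children]

/-- Every rightmost path has an open node, namely its leaf. -/
lemma one_le_countP_rpath (t : BTree) : 1 ≤ (rpath t).countP isOpenNode := by
  obtain ⟨n, ts⟩ := t
  rcases List.eq_nil_or_concat' ts with rfl | ⟨l, c, rfl⟩
  · simp [rpath, rpathL, isOpenNode, children]
  · have := one_le_countP_rpath c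
    simp only [rpath, rpathL_append, List.countP_cons]
    omega
termination_by sizeOf t
decreasing_by
  have := List.sizeOf_lt_of_mem (List.mem_append_right l (List.mem_singleton_self c))
  simp_all
  omega

/-! ### Commutation along the rightmost path -/

/-- The walk defining `μ` tests openness of a node through its children only, so relabeling the
root of a nontrivial tree affects nothing but the new root label. -/
lemma muT_node_eq (S : BTree) (j a b : ℕ) {ts : List BTree} (h : ts ≠ []) :
    muT S j (node a ts) = node (a + 1) (muT S j (node b ts)).children := by
  have ho : isOpenNode (node a ts) = isOpenNode (node b ts) := rfl
  have he : ts.isEmpty = false := by simp [h]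
  simp only [muT, ho, he]
  split_ifs <;> simp [children]

/-- The identity for a subtree `node n ts` of `R` hanging from its rightmost path, when the only
open node of that subtree's rightmost path is the leaf. -/
lemma muT_nuT (S T : BTree) (k j : ℕ) (hT : T.children ≠ []) (hk : k ≤ childSum T) (hj : 1 ≤ j)
    (n : ℕ) (ts : List BTree) (hts : ts ≠ []) (hv : ∀ c ∈ ts, ValidSub c)
    (ho : (rpath (node n ts)).countP isOpenNode = 1) :
    muT S (j + 1) (nuT T k (node n ts)) = nuT (muT S j T) (k + 1) (node n ts) := by
  rcases List.eq_nil_or_concat' ts with rfl | ⟨l, ⟨m, us⟩, rfl⟩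
  · exact absurd rfl hts
  obtain ⟨_, _, hm, -, hus⟩ := hv (node m us) (by simp)
  simp only [rpath, rpathL_append, List.countP_cons] at ho
  have h1 := one_le_countP_rpath (node m us)
  simp only [rpath, List.countP_cons] at h1
  have hno : isOpenNode (node n (l ++ [node m us])) = false := by
    by_contra h
    simp only [Bool.not_eq_false] at h
    rw [h] at ho
    simp only [if_true] at ho
    omega
  rcases List.eq_nil_or_concat' us with rfl | ⟨ls, c, rfl⟩
  · -- The last child is the leaf `x`: after the grafting of `T` it is moderate, so its parent
    -- uses up one of the `j + 1` open nodes.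
    obtain rfl := hm rfl
    have hopen : isOpenNode (node (n + k) (l ++ [node k T.children])) = true := by
      rw [isOpenNode_append]
      simpa [moderate_iff, childSum, hT] using hk
    obtain ⟨b, vs⟩ := T
    rw [nuT_append, nuT_append]
    simp only [nuT, Nat.zero_add, children_node] at hT ⊢
    rw [children_node] at hopen
    rw [muT, hopen]
    have : ¬ (j + 1 ≤ 1) := by omega
    simp only [this, decide_false, Bool.and_false, Bool.false_eq_true, if_false, if_true,
      Nat.add_sub_cancel, muL_append]
    rw [muT_node_eq S j k b hT]
    simp [Nat.add_assoc]
  · have hexc : childSum (node m (ls ++ [c])) < m := by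
      rw [isOpenNode_append] at hno
      rw [Bool.and_eq_false_iff, ← Bool.not_eq_true (moderate _), moderate_iff] at hno
      simpa using hno
    have hlab : (nuT T k c).label = c.label + k := by
      obtain ⟨p, ws⟩ := c
      cases ws <;> simp [nuT]
    -- Both the label and the sum of the children's labels grow by `k`.
    have hno' : isOpenNode (node (n + k) (l ++ [node (m + k) (ls ++ [nuT T k c])])) = false := by
      rw [isOpenNode_append]
      simp only [childSum, children_node, List.map_append, List.sum_append, List.map_cons,
        List.map_nil, List.sum_cons, List.sum_nil] at hexc
      simp only [children_node, moderate, label_node, childSum, List.map_append, List.sum_append,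
        List.map_cons, List.map_nil, List.sum_cons, List.sum_nil, hlab, Bool.and_eq_false_iff,
        decide_eq_false_iff_not]
      right
      omega
    have hsize : sizeOf (ls ++ [c]) < sizeOf (l ++ [node m (ls ++ [c])]) := by
      have := List.sizeOf_lt_of_mem
        (List.mem_append_right l (List.mem_singleton_self (node m (ls ++ [c]))))
      simp only [node.sizeOf_spec] at this
      omega
    have ih := muT_nuT S T k j hT hk hj m (ls ++ [c]) (by simp) hus (by
      simpa [rpath, List.countP_cons, hno] using ho)
    rw [nuT_append T, nuT_append (muT S j T), ← ih, nuT_append, muT, hno']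
    simp [Nat.add_assoc]
termination_by sizeOf ts
decreasing_by
  subst_vars
  rename_i h
  rw [h]
  assumption

/-- Let R, S, T be β(0,1)-trees with open(R) = 1, root(S) = 1 and T nontrivial, and let
i, j be integers with 1 ≤ i ≤ root(T) and 1 ≤ j ≤ open(T).  Then
ν_{i+1}(R, μ_j(S,T)) = μ_{j+1}(S, ν_i(R,T)). -/
theorem nu_mu_comm (R S T : BTree) (i j : ℕ) (hR : IsBeta R) (hS : IsBeta S)
    (hT : IsBeta T) (hoR : openStat R = 1) (hrS : rootStat S = 1) (hTnt : T ≠ eps)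
    (hi1 : 1 ≤ i) (hi2 : i ≤ rootStat T) (hj1 : 1 ≤ j) (hj2 : j ≤ openStat T) :
    nu (i + 1) R (mu j S T) = mu (j + 1) S (nu i R T) := by
  obtain ⟨n, ts⟩ := R
  have hTc : T.children ≠ [] := by
    intro h
    have h0 := hT.1 h
    obtain ⟨b, vs⟩ := T
    simp only [children, label] at h h0
    exact hTnt (by rw [h, h0, eps])
  have hts : ts ≠ [] := by
    rintro rfl
    have h0 : n = 0 := hR.1 rfl
    subst h0
    simp [openStat] at hoR
  have ho : (rpath (node n ts)).countP isOpenNode = 1 := by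
    rw [openStat] at hoR
    · exact hoR
    · intro h
      injection h with _ h
      exact hts h
  obtain ⟨k, rfl⟩ : ∃ k, i = k + 1 := ⟨i - 1, by omega⟩
  have hk : k ≤ childSum T := by
    have := hT.2.1 hTc
    rw [rootStat] at hi2
    omega
  exact (muT_nuT S T k j hTc hk hj1 n ts hts hR.2.2 ho).symm

end BTree
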